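/- arXiv:quant-ph/0702007 — 3 statements merged into one kernel-verified Lean document; each statement's English description precedes it below -/
import Mathlib

section
/- (Third-order equation for the ground-state amplitude of Algorithm 1.) For every Algorithm-1 reduced solution, the function b₁ is three times differentiable and satisfies, for all t ∈ ℝ: b₁‴(t) + i·ω·b₁″(t) + (N−1)·γ²·b₁′(t) + i·ω·γ²·b₁(t) = 0. -/
open Complex Real

/-!
In the rotating frame `c(t) = e^{-iωt} b₃(t)` the reduced system becomes autonomous:
`b₁′ = -iγ b₂`, `b₂′ = -iγ b₁ - i(N-2)γ c`, `c′ = -iγ b₂ - iω c`. Differentiating the first equation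
twice and eliminating `b₂` and `c` gives the third-order equation, whose coefficients are those of
the characteristic polynomial of the system.
-/

section LinearChain

variable {𝕜 R E : Type*} [NontriviallyNormedField 𝕜] [CommRing R] [NormedAddCommGroup E]
  [NormedSpace 𝕜 E] [Module R E] [SMulCommClass 𝕜 R E] [ContinuousConstSMul R E]
  {a b c d e : R} {u v w : 𝕜 → E}

theorem hasDerivAt_deriv_of_linear_chain (hu : ∀ t, HasDerivAt u (a • v t) t) {t : 𝕜}
    (hv : HasDerivAt v (b • u t + c • w t) t) :
    HasDerivAt (deriv u) ((a * b) • u t + (a * c) • w t) t := by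
  have deriv_u : deriv u = fun s => a • v s := funext fun s => (hu s).deriv
  rw [deriv_u]
  exact (hv.fun_const_smul a).congr_deriv (by module)

theorem hasDerivAt_deriv_deriv_of_linear_chain (hu : ∀ t, HasDerivAt u (a • v t) t)
    (hv : ∀ t, HasDerivAt v (b • u t + c • w t) t) {t : 𝕜}
    (hw : HasDerivAt w (d • v t + e • w t) t) :
    HasDerivAt (deriv (deriv u))
      (e • deriv (deriv u) t + (a * b + c * d) • deriv u t - (a * b * e) • u t) t := by
  have deriv_deriv_u : deriv (deriv u) = fun s => (a * b) • u s + (a * c) • w s :=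
    funext fun s => (hasDerivAt_deriv_of_linear_chain hu (hv s)).deriv
  rw [deriv_deriv_u, (hu t).deriv]
  exact (((hu t).fun_const_smul (a * b)).fun_add (hw.fun_const_smul (a * c))).congr_deriv
    (by module)

end LinearChain

section Amplitudes

variable {E : Type*} [NormedAddCommGroup E] [NormedSpace ℂ E]

theorem hasDerivAt_of_I_smul_deriv_eq {f : ℝ → E} {x : E} {t : ℝ} (hf : DifferentiableAt ℝ f t)
    (h : I • deriv f t = x) : HasDerivAt f (-I • x) t := by
  refine hf.hasDerivAt.congr_deriv ?_
  rw [← h, smul_smul, neg_mul, I_mul_I, neg_neg, one_smul]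

/-- The amplitude `f` seen from the frame rotating at angular frequency `ω`. The frequency may be
complex, in which case the factor need not have modulus one. -/
noncomputable def rotatingFrame (ω : ℂ) (f : ℝ → E) (t : ℝ) : E :=
  cexp (-(I * ω * t)) • f t

theorem hasDerivAt_rotatingFrame (ω : ℂ) {f : ℝ → E} {f' : E} {t : ℝ} (hf : HasDerivAt f f' t) :
    HasDerivAt (rotatingFrame ω f)
      (cexp (-(I * ω * t)) • f' - (I * ω) • rotatingFrame ω f t) t := by
  have phase : HasDerivAt (fun s : ℝ => cexp (-(I * ω * s)))
      (cexp (-(I * ω * t)) * -(I * ω * 1)) t :=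
    ((hasDerivAt_id t).ofReal_comp.const_mul (I * ω)).fun_neg.cexp
  refine (phase.fun_smul hf).congr_deriv ?_
  rw [rotatingFrame]
  module

theorem hasDerivAt_rotatingFrame_of_I_smul_deriv_eq {γ ω : ℂ} {f g : ℝ → E} {t : ℝ}
    (hf : DifferentiableAt ℝ f t) (h : I • deriv f t = (γ * cexp (I * ω * t)) • g t) :
    HasDerivAt (rotatingFrame ω f) ((-I * γ) • g t + (-I * ω) • rotatingFrame ω f t) t := by
  have phase_cancel : cexp (-(I * ω * t)) * cexp (I * ω * t) = 1 := by
    rw [← Complex.exp_add, neg_add_cancel, Complex.exp_zero]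
  have forcing : cexp (-(I * ω * t)) • -I • (γ * cexp (I * ω * t)) • g t = (-I * γ) • g t := by
    rw [smul_smul, smul_smul]
    congr 1
    linear_combination (-I * γ) * phase_cancel
  refine (hasDerivAt_rotatingFrame ω (hasDerivAt_of_I_smul_deriv_eq hf h)).congr_deriv ?_
  rw [forcing]
  module

theorem algorithm1_third_order_ode_general (N γ ω : ℂ) {b₁ b₂ b₃ : ℝ → E}
    (hd₁ : Differentiable ℝ b₁) (hd₂ : Differentiable ℝ b₂) (hd₃ : Differentiable ℝ b₃)
    (heq₁ : ∀ t : ℝ, I • deriv b₁ t = γ • b₂ t)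
    (heq₂ : ∀ t : ℝ, I • deriv b₂ t =
      γ • b₁ t + ((N - 2) * γ * cexp (-(I * ω * t))) • b₃ t)
    (heq₃ : ∀ t : ℝ, I • deriv b₃ t = (γ * cexp (I * ω * t)) • b₂ t) :
    Differentiable ℝ (deriv b₁) ∧
    Differentiable ℝ (deriv (deriv b₁)) ∧
    ∀ t : ℝ,
      deriv (deriv (deriv b₁)) t + (I * ω) • deriv (deriv b₁) t +
        ((N - 1) * γ ^ 2) • deriv b₁ t + (I * ω * γ ^ 2) • b₁ t = 0 := by
  have hasDerivAt_b₁ (t : ℝ) : HasDerivAt b₁ ((-I * γ) • b₂ t) t :=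
    (hasDerivAt_of_I_smul_deriv_eq (hd₁ t) (heq₁ t)).congr_deriv (by module)
  have hasDerivAt_b₂ (t : ℝ) : HasDerivAt b₂
      ((-I * γ) • b₁ t + (-I * ((N - 2) * γ)) • rotatingFrame ω b₃ t) t := by
    refine (hasDerivAt_of_I_smul_deriv_eq (hd₂ t) (heq₂ t)).congr_deriv ?_
    rw [rotatingFrame]
    module
  have hasDerivAt_deriv_deriv_b₁ (t : ℝ) :=
    hasDerivAt_deriv_deriv_of_linear_chain hasDerivAt_b₁ hasDerivAt_b₂
      (hasDerivAt_rotatingFrame_of_I_smul_deriv_eq (hd₃ t) (heq₃ t))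
  have hasDerivAt_deriv_b₁ (t : ℝ) :=
    hasDerivAt_deriv_of_linear_chain hasDerivAt_b₁ (hasDerivAt_b₂ t)
  refine ⟨fun t => (hasDerivAt_deriv_b₁ t).differentiableAt,
    fun t => (hasDerivAt_deriv_deriv_b₁ t).differentiableAt, fun t => ?_⟩
  have coeff_deriv : -I * γ * (-I * γ) + -I * ((N - 2) * γ) * (-I * γ) = -((N - 1) * γ ^ 2) := by
    linear_combination (N - 1) * γ ^ 2 * I_sq
  have coeff_self : -I * γ * (-I * γ) * (-I * ω) = I * ω * γ ^ 2 := by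
    linear_combination -(I * ω * γ ^ 2) * I_sq
  rw [(hasDerivAt_deriv_deriv_b₁ t).deriv, coeff_deriv, coeff_self]
  module

end Amplitudes

/-- Third-order ODE for the ground-state amplitude of Algorithm 1: for every
Algorithm-1 reduced solution, `b₁` is three times differentiable and satisfies
`b₁‴ + i·ω·b₁″ + (N−1)·γ²·b₁′ + i·ω·γ²·b₁ = 0`. -/
theorem algorithm1_third_order_ode
    (N : ℕ) (hN : 2 ≤ N) (γ ω : ℝ)
    (b₁ b₂ b₃ : ℝ → ℂ)
    (hd₁ : Differentiable ℝ b₁) (hd₂ : Differentiable ℝ b₂)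
    (hd₃ : Differentiable ℝ b₃)
    (heq₁ : ∀ t : ℝ, Complex.I * deriv b₁ t = (γ : ℂ) * b₂ t)
    (heq₂ : ∀ t : ℝ, Complex.I * deriv b₂ t =
      (γ : ℂ) * b₁ t +
        ((N : ℂ) - 2) * γ * Complex.exp (-(Complex.I * ω * t)) * b₃ t)
    (heq₃ : ∀ t : ℝ, Complex.I * deriv b₃ t =
      (γ : ℂ) * Complex.exp (Complex.I * ω * t) * b₂ t) :
    Differentiable ℝ (deriv b₁) ∧
    Differentiable ℝ (deriv (deriv b₁)) ∧
    ∀ t : ℝ,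
      deriv (deriv (deriv b₁)) t + Complex.I * ω * deriv (deriv b₁) t +
        ((N : ℂ) - 1) * γ ^ 2 * deriv b₁ t +
        Complex.I * ω * γ ^ 2 * b₁ t = 0 := by
  exact algorithm1_third_order_ode_general (N : ℂ) γ ω hd₁ hd₂ hd₃ heq₁ heq₂ heq₃
end

section
/- (Reduced equations for Algorithm 2 at resonance.) Assume ω = E. For every Algorithm-2 solution, the functions b₁(t) := c₁(t), b₂(t) := e^{iEt}·c₂(t), b₃(t) := e^{iEt}·c₃(t), b₄(t) := e^{iEt}·c₄(t) satisfy, for all t ∈ ℝ: i·b₁′(t) = γ·b₂(t), i·b₂′(t) = γ·b₁(t) + ((N−2)/2)·γ·(e^{−iEt}·b₃(t) + e^{iEt}·b₄(t)), i·b₃′(t) = γ·e^{iEt}·b₂(t), and i·b₄′(t) = γ·e^{−iEt}·b₂(t). -/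
open Complex Real Finset

/-- The perturbation matrix entry `⟨p|V^o_{[2,γ,ω]}(t)|q⟩` of Algorithm 2
(with initial state `j = 2`). -/
noncomputable def V2o (γ ω : ℝ) (p q : ℕ) (t : ℝ) : ℂ :=
  if (p = 2 ∧ q ≠ 2 ∧ Even q) ∨ (q = 2 ∧ p ≠ 2 ∧ Odd p) then
    (γ : ℂ) * Complex.exp (Complex.I * ω * t)
  else if (q = 2 ∧ p ≠ 2 ∧ Even p) ∨ (p = 2 ∧ q ≠ 2 ∧ Odd q) then
    (γ : ℂ) * Complex.exp (-(Complex.I * ω * t))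
  else 0

/-!
Level `2` is coupled to every other level, and no other two levels are coupled to each other. Hence
all levels `q > 2` of one parity obey the same scalar equation `i·c_q′ = E·c_q + g`, whose source
`g` involves `c₂` only; starting from the same value, they agree with `c₃` or `c₄` for all time. The
sum in the equation for `c₂` thus collapses to `c₁`, `c₃` and `c₄`, weighted by the number of levels
of each parity, and passing to `e^{iEt}·c_p` removes the energy term.
-/

section InteractionPicture

/-- The amplitude `f` of a level of energy `E`, viewed in the interaction picture: the factor
`e^{iEt}` undoes the free evolution `e^{-iEt}`. -/
noncomputable def interactionPicture (E : ℝ) (f : ℝ → ℂ) (t : ℝ) : ℂ :=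
  Complex.exp (Complex.I * E * t) * f t

variable {E : ℝ} {f g : ℝ → ℂ} {t : ℝ}

lemma hasDerivAt_interactionPicture {f' : ℂ} (hf : HasDerivAt f f' t) :
    HasDerivAt (interactionPicture E f)
      (Complex.exp (Complex.I * E * t) * (Complex.I * E * f t + f')) t := by
  have hphase : HasDerivAt (fun s : ℝ => Complex.I * E * (s : ℂ)) (Complex.I * E * 1) t :=
    Complex.ofRealCLM.hasDerivAt.const_mul _
  exact (hphase.cexp.mul hf).congr_deriv (by ring)

lemma I_mul_deriv_interactionPicture {source : ℂ} (hf : DifferentiableAt ℝ f t)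
    (h : Complex.I * deriv f t = E * f t + source) :
    Complex.I * deriv (interactionPicture E f) t = Complex.exp (Complex.I * E * t) * source := by
  rw [(hasDerivAt_interactionPicture hf.hasDerivAt).deriv]
  linear_combination Complex.exp (Complex.I * E * t) * h +
    Complex.exp (Complex.I * E * t) * E * f t * Complex.I_mul_I

lemma eq_of_I_mul_deriv_eq {source : ℝ → ℂ} {t₀ : ℝ}
    (hf : Differentiable ℝ f) (hg : Differentiable ℝ g)
    (hf' : ∀ t, Complex.I * deriv f t = E * f t + source t)
    (hg' : ∀ t, Complex.I * deriv g t = E * g t + source t)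
    (h₀ : f t₀ = g t₀) : f = g := by
  have hdiff (h : ℝ → ℂ) (hh : Differentiable ℝ h) : Differentiable ℝ (interactionPicture E h) :=
    fun t => (hasDerivAt_interactionPicture (hh t).hasDerivAt).differentiableAt
  have hderiv : Set.univ.EqOn (deriv (interactionPicture E f)) (deriv (interactionPicture E g)) :=
    fun t _ => mul_left_cancel₀ Complex.I_ne_zero <|
      (I_mul_deriv_interactionPicture (hf t) (hf' t)).trans
        (I_mul_deriv_interactionPicture (hg t) (hg' t)).symm
  funext t
  have heq : interactionPicture E f t = interactionPicture E g t :=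
    isOpen_univ.eqOn_of_deriv_eq isPreconnected_univ (hdiff f hf).differentiableOn
      (hdiff g hg).differentiableOn hderiv (Set.mem_univ t₀)
      (by simp only [interactionPicture, h₀]) (Set.mem_univ t)
  exact mul_left_cancel₀ (Complex.exp_ne_zero _) heq

end InteractionPicture

section ParityCount

variable {m n : ℕ}

lemma card_filter_odd_Ioc_two_mul : #{q ∈ Ioc (2 * m) (2 * n) | Odd q} = n - m := by
  rcases le_total n m with hnm | hmn
  · rw [Ioc_eq_empty_of_le (by lia), filter_empty, card_empty, Nat.sub_eq_zero_of_le hnm]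
  · induction n, hmn using Nat.le_induction with
    | base => simp
    | succ n hmn ih =>
      rw [card_filter] at ih ⊢
      rw [mul_add_one, sum_Ioc_succ_top (by lia), sum_Ioc_succ_top (by lia), ih]
      have hodd : Odd (2 * n + 1) := odd_two_mul_add_one n
      have heven : ¬Odd (2 * n + 1 + 1) := Nat.not_odd_iff_even.2 hodd.add_one
      rw [if_pos hodd, if_neg heven]
      lia

lemma card_filter_even_Ioc_two_mul : #{q ∈ Ioc (2 * m) (2 * n) | Even q} = n - m := by
  have hsplit := card_filter_add_card_filter_not (s := Ioc (2 * m) (2 * n)) Odd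
  simp only [Nat.not_odd_iff_even, Nat.card_Ioc, card_filter_odd_Ioc_two_mul] at hsplit
  lia

end ParityCount

section Perturbation

variable {γ ω : ℝ} {p q N : ℕ} {t : ℝ}

lemma V2o_of_ne_two (hp : p ≠ 2) (hq : q ≠ 2) : V2o γ ω p q t = 0 := by
  simp [V2o, hp, hq]

lemma V2o_two_two : V2o γ ω 2 2 t = 0 := by
  simp [V2o]

lemma V2o_two_left_of_odd (hq : Odd q) :
    V2o γ ω 2 q t = γ * Complex.exp (-(Complex.I * ω * t)) := by
  have hq₂ : q ≠ 2 := by rintro rfl; exact absurd hq (by decide)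
  simp [V2o, hq, hq₂]

lemma V2o_two_left_of_even (hq₂ : q ≠ 2) (hq : Even q) :
    V2o γ ω 2 q t = γ * Complex.exp (Complex.I * ω * t) := by
  simp [V2o, hq, hq₂]

lemma V2o_two_right_of_odd (hp : Odd p) :
    V2o γ ω p 2 t = γ * Complex.exp (Complex.I * ω * t) := by
  have hp₂ : p ≠ 2 := by rintro rfl; exact absurd hp (by decide)
  simp [V2o, hp, hp₂]

lemma V2o_two_right_of_even (hp₂ : p ≠ 2) (hp : Even p) :
    V2o γ ω p 2 t = γ * Complex.exp (-(Complex.I * ω * t)) := by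
  simp [V2o, hp, hp₂]

lemma sum_V2o_mul_of_ne_two (hN : 2 ≤ N) (hp : p ≠ 2) (x : ℕ → ℂ) :
    ∑ q ∈ Icc 1 N, V2o γ ω p q t * x q = V2o γ ω p 2 t * x 2 :=
  sum_eq_single_of_mem 2 (mem_Icc.2 ⟨one_le_two, hN⟩) fun q _ hq => by
    rw [V2o_of_ne_two hp hq, zero_mul]

lemma sum_V2o_two_mul (hN : 2 ≤ N) {x : ℕ → ℂ} {a b : ℂ}
    (hodd : ∀ q ∈ Ioc 2 N, Odd q → x q = a) (heven : ∀ q ∈ Ioc 2 N, Even q → x q = b) :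
    ∑ q ∈ Icc 1 N, V2o γ ω 2 q t * x q =
      γ * Complex.exp (-(Complex.I * ω * t)) * x 1 +
        γ * (#{q ∈ Ioc 2 N | Odd q} * Complex.exp (-(Complex.I * ω * t)) * a +
          #{q ∈ Ioc 2 N | Even q} * Complex.exp (Complex.I * ω * t) * b) := by
  have hlow : ∑ q ∈ Ioc 0 2, V2o γ ω 2 q t * x q =
      γ * Complex.exp (-(Complex.I * ω * t)) * x 1 := by
    simp [sum_Ioc_succ_top, V2o_two_two, V2o_two_left_of_odd]
  have hsum_odd : ∑ q ∈ Ioc 2 N with Odd q, V2o γ ω 2 q t * x q =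
      #{q ∈ Ioc 2 N | Odd q} * (γ * Complex.exp (-(Complex.I * ω * t)) * a) := by
    rw [← nsmul_eq_mul]
    refine sum_eq_card_nsmul fun q hq => ?_
    obtain ⟨hq, hq_odd⟩ := mem_filter.1 hq
    rw [V2o_two_left_of_odd hq_odd, hodd q hq hq_odd]
  have hsum_even : ∑ q ∈ Ioc 2 N with Even q, V2o γ ω 2 q t * x q =
      #{q ∈ Ioc 2 N | Even q} * (γ * Complex.exp (Complex.I * ω * t) * b) := by
    rw [← nsmul_eq_mul]
    refine sum_eq_card_nsmul fun q hq => ?_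
    obtain ⟨hq, hq_even⟩ := mem_filter.1 hq
    rw [V2o_two_left_of_even (mem_Ioc.1 hq).1.ne' hq_even, heven q hq hq_even]
  have hsplit := sum_filter_add_sum_filter_not (Ioc 2 N) Odd fun q => V2o γ ω 2 q t * x q
  simp only [Nat.not_odd_iff_even] at hsplit
  rw [show Icc 1 N = Ioc 0 N from Icc_add_one_left_eq_Ioc 0 N,
    ← sum_Ioc_consecutive _ (Nat.zero_le 2) hN, hlow, ← hsplit, hsum_odd, hsum_even]
  ring

end Perturbation

/-- The Schrödinger equation of Algorithm 2 with `N` levels, of energies `0, E, …, E`, at an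
arbitrary driving frequency `ω` and without initial conditions. Only the components
`c 1, …, c N` are constrained. -/
structure IsAlgorithm2Solution (N : ℕ) (E γ ω : ℝ) (c : ℕ → ℝ → ℂ) : Prop where
  differentiable : ∀ p ∈ Icc 1 N, Differentiable ℝ (c p)
  I_mul_deriv : ∀ p ∈ Icc 1 N, ∀ t : ℝ,
    Complex.I * deriv (c p) t = ((if p = 1 then (0 : ℝ) else E) : ℂ) * c p t +
      ∑ q ∈ Icc 1 N, V2o γ ω p q t * c q t

namespace IsAlgorithm2Solution

variable {N : ℕ} {E γ ω : ℝ} {c : ℕ → ℝ → ℂ}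

lemma I_mul_deriv_one (hc : IsAlgorithm2Solution N E γ ω c) (hN : 2 ≤ N) (t : ℝ) :
    Complex.I * deriv (c 1) t = γ * Complex.exp (Complex.I * ω * t) * c 2 t := by
  rw [hc.I_mul_deriv 1 (mem_Icc.2 (by lia)) t, sum_V2o_mul_of_ne_two hN (by decide) (c · t),
    V2o_two_right_of_odd odd_one]
  simp

lemma I_mul_deriv_of_two_lt (hc : IsAlgorithm2Solution N E γ ω c) {p : ℕ} (hp : p ∈ Ioc 2 N)
    (t : ℝ) : Complex.I * deriv (c p) t = E * c p t + V2o γ ω p 2 t * c 2 t := by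
  obtain ⟨hp₂, hpN⟩ := mem_Ioc.1 hp
  rw [hc.I_mul_deriv p (mem_Icc.2 (by lia)) t,
    sum_V2o_mul_of_ne_two (hp₂.le.trans hpN) hp₂.ne' (c · t), if_neg (by lia)]

lemma differentiable_of_two_lt (hc : IsAlgorithm2Solution N E γ ω c) {p : ℕ} (hp : p ∈ Ioc 2 N) :
    Differentiable ℝ (c p) :=
  hc.differentiable p (mem_Icc.2 (by have := mem_Ioc.1 hp; lia))

lemma eq_of_V2o_two_right_eq (hc : IsAlgorithm2Solution N E γ ω c) {p q : ℕ} (hp : p ∈ Ioc 2 N)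
    (hq : q ∈ Ioc 2 N) (hV : ∀ t, V2o γ ω p 2 t = V2o γ ω q 2 t) {t₀ : ℝ}
    (h₀ : c p t₀ = c q t₀) : c p = c q :=
  eq_of_I_mul_deriv_eq (hc.differentiable_of_two_lt hp) (hc.differentiable_of_two_lt hq)
    (hc.I_mul_deriv_of_two_lt hp)
    (fun t => by rw [hc.I_mul_deriv_of_two_lt hq, hV]) h₀

lemma I_mul_deriv_interactionPicture_of_odd (hc : IsAlgorithm2Solution N E γ ω c) {p : ℕ}
    (hp : p ∈ Ioc 2 N) (hp_odd : Odd p) (t : ℝ) :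
    Complex.I * deriv (interactionPicture E (c p)) t =
      γ * Complex.exp (Complex.I * ω * t) * interactionPicture E (c 2) t := by
  rw [I_mul_deriv_interactionPicture (hc.differentiable_of_two_lt hp t)
    (hc.I_mul_deriv_of_two_lt hp t), V2o_two_right_of_odd hp_odd, interactionPicture]
  ring

lemma I_mul_deriv_interactionPicture_of_even (hc : IsAlgorithm2Solution N E γ ω c) {p : ℕ}
    (hp : p ∈ Ioc 2 N) (hp_even : Even p) (t : ℝ) :
    Complex.I * deriv (interactionPicture E (c p)) t =
      γ * Complex.exp (-(Complex.I * ω * t)) * interactionPicture E (c 2) t := by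
  rw [I_mul_deriv_interactionPicture (hc.differentiable_of_two_lt hp t)
    (hc.I_mul_deriv_of_two_lt hp t),
    V2o_two_right_of_even (mem_Ioc.1 hp).1.ne' hp_even, interactionPicture]
  ring

lemma I_mul_deriv_interactionPicture_two (hc : IsAlgorithm2Solution N E γ ω c) (hN : 4 ≤ N)
    {t₀ : ℝ} (hodd : ∀ q ∈ Ioc 2 N, Odd q → c q t₀ = c 3 t₀)
    (heven : ∀ q ∈ Ioc 2 N, Even q → c q t₀ = c 4 t₀) (t : ℝ) :
    Complex.I * deriv (interactionPicture E (c 2)) t =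
      γ * Complex.exp (-(Complex.I * (ω - E) * t)) * c 1 t +
        γ * (#{q ∈ Ioc 2 N | Odd q} * Complex.exp (-(Complex.I * ω * t)) *
            interactionPicture E (c 3) t +
          #{q ∈ Ioc 2 N | Even q} * Complex.exp (Complex.I * ω * t) *
            interactionPicture E (c 4) t) := by
  have hc_odd : ∀ q ∈ Ioc 2 N, Odd q → c q t = c 3 t := fun q hq hq_odd => by
    have hV (s : ℝ) : V2o γ ω q 2 s = V2o γ ω 3 2 s := by
      rw [V2o_two_right_of_odd hq_odd, V2o_two_right_of_odd (by decide)]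
    rw [hc.eq_of_V2o_two_right_eq hq (mem_Ioc.2 (by lia)) hV (hodd q hq hq_odd)]
  have hc_even : ∀ q ∈ Ioc 2 N, Even q → c q t = c 4 t := fun q hq hq_even => by
    have hV (s : ℝ) : V2o γ ω q 2 s = V2o γ ω 4 2 s := by
      rw [V2o_two_right_of_even (mem_Ioc.1 hq).1.ne' hq_even,
        V2o_two_right_of_even (by decide) (by decide)]
    rw [hc.eq_of_V2o_two_right_eq hq (mem_Ioc.2 (by lia)) hV (heven q hq hq_even)]
  have hmem : 2 ∈ Icc 1 N := mem_Icc.2 (by lia)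
  have hphase : Complex.exp (-(Complex.I * (ω - E) * t)) =
      Complex.exp (Complex.I * E * t) * Complex.exp (-(Complex.I * ω * t)) := by
    rw [← Complex.exp_add]
    ring_nf
  rw [I_mul_deriv_interactionPicture (hc.differentiable 2 hmem t) (hc.I_mul_deriv 2 hmem t),
    sum_V2o_two_mul (by lia) hc_odd hc_even, hphase, interactionPicture, interactionPicture]
  ring

end IsAlgorithm2Solution

/-- Off resonance the coupling between levels `1` and `2` keeps a phase at the detuning `ω - E`, and
for `N` of either parity the factor `(N - 2) / 2` becomes the number of levels `q > 2` of the
corresponding parity. -/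
theorem algorithm2_reduced_equations_general {N : ℕ} (hN : 4 ≤ N) {E γ ω : ℝ} {c : ℕ → ℝ → ℂ}
    (hc : IsAlgorithm2Solution N E γ ω c) {t₀ : ℝ}
    (hodd : ∀ q ∈ Ioc 2 N, Odd q → c q t₀ = c 3 t₀)
    (heven : ∀ q ∈ Ioc 2 N, Even q → c q t₀ = c 4 t₀) (t : ℝ) :
    Complex.I * deriv (c 1) t =
      γ * Complex.exp (Complex.I * (ω - E) * t) * interactionPicture E (c 2) t ∧
    Complex.I * deriv (interactionPicture E (c 2)) t =
      γ * Complex.exp (-(Complex.I * (ω - E) * t)) * c 1 t +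
        γ * (#{q ∈ Ioc 2 N | Odd q} * Complex.exp (-(Complex.I * ω * t)) *
            interactionPicture E (c 3) t +
          #{q ∈ Ioc 2 N | Even q} * Complex.exp (Complex.I * ω * t) *
            interactionPicture E (c 4) t) ∧
    Complex.I * deriv (interactionPicture E (c 3)) t =
      γ * Complex.exp (Complex.I * ω * t) * interactionPicture E (c 2) t ∧
    Complex.I * deriv (interactionPicture E (c 4)) t =
      γ * Complex.exp (-(Complex.I * ω * t)) * interactionPicture E (c 2) t := by
  refine ⟨?_, hc.I_mul_deriv_interactionPicture_two hN hodd heven t,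
    hc.I_mul_deriv_interactionPicture_of_odd (mem_Ioc.2 (by lia)) (by decide) t,
    hc.I_mul_deriv_interactionPicture_of_even (mem_Ioc.2 (by lia)) (by decide) t⟩
  have hphase : Complex.exp (Complex.I * ω * t) =
      Complex.exp (Complex.I * (ω - E) * t) * Complex.exp (Complex.I * E * t) := by
    rw [← Complex.exp_add]
    ring_nf
  rw [hc.I_mul_deriv_one (by lia) t, hphase, interactionPicture]
  ring

/-- Reduced equations for Algorithm 2 at resonance `ω = E`: the functions
`b₁ = c₁`, `b₂ = e^{iEt}c₂`, `b₃ = e^{iEt}c₃`, `b₄ = e^{iEt}c₄` satisfy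
`i·b₁′ = γ·b₂`, `i·b₂′ = γ·b₁ + ((N−2)/2)·γ·(e^{−iEt}·b₃ + e^{iEt}·b₄)`,
`i·b₃′ = γ·e^{iEt}·b₂`, and `i·b₄′ = γ·e^{−iEt}·b₂`. -/
theorem algorithm2_reduced_equations
    (N : ℕ) (hN : 4 ≤ N) (hNeven : Even N) (E γ ω : ℝ) (hE : 0 < E)
    (hres : ω = E)
    (c : ℕ → ℝ → ℂ)
    (hdiff : ∀ p, Differentiable ℝ (c p))
    (heq : ∀ p, 1 ≤ p → p ≤ N → ∀ t : ℝ,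
      Complex.I * deriv (c p) t =
        ((if p = 1 then (0 : ℝ) else E) : ℂ) * c p t +
          ∑ q ∈ Finset.Icc 1 N, V2o γ ω p q t * c q t)
    (hinit₂ : c 2 0 = 1)
    (hinit : ∀ p, p ≠ 2 → c p 0 = 0)
    (b₁ b₂ b₃ b₄ : ℝ → ℂ)
    (hb₁ : b₁ = c 1)
    (hb₂ : b₂ = fun t : ℝ => Complex.exp (Complex.I * E * t) * c 2 t)
    (hb₃ : b₃ = fun t : ℝ => Complex.exp (Complex.I * E * t) * c 3 t)
    (hb₄ : b₄ = fun t : ℝ => Complex.exp (Complex.I * E * t) * c 4 t) :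
    ∀ t : ℝ,
      Complex.I * deriv b₁ t = (γ : ℂ) * b₂ t ∧
      Complex.I * deriv b₂ t =
        (γ : ℂ) * b₁ t +
          (((N : ℂ) - 2) / 2) * γ *
            (Complex.exp (-(Complex.I * E * t)) * b₃ t +
              Complex.exp (Complex.I * E * t) * b₄ t) ∧
      Complex.I * deriv b₃ t = (γ : ℂ) * Complex.exp (Complex.I * E * t) * b₂ t ∧
      Complex.I * deriv b₄ t =
        (γ : ℂ) * Complex.exp (-(Complex.I * E * t)) * b₂ t := by
  intro t
  subst hres hb₁
  obtain rfl : b₂ = interactionPicture ω (c 2) := hb₂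
  obtain rfl : b₃ = interactionPicture ω (c 3) := hb₃
  obtain rfl : b₄ = interactionPicture ω (c 4) := hb₄
  have hc : IsAlgorithm2Solution N ω γ ω c :=
    ⟨fun p _ => hdiff p, fun p hp => heq p (mem_Icc.1 hp).1 (mem_Icc.1 hp).2⟩
  have hzero (q : ℕ) (hq : q ∈ Ioc 2 N) : c q 0 = 0 := hinit q (mem_Ioc.1 hq).1.ne'
  obtain ⟨h₁, h₂, h₃, h₄⟩ := algorithm2_reduced_equations_general hN hc
    (fun q hq _ => (hzero q hq).trans (hinit 3 (by decide)).symm)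
    (fun q hq _ => (hzero q hq).trans (hinit 4 (by decide)).symm) t
  refine ⟨by simpa using h₁, ?_, h₃, h₄⟩
  obtain ⟨n, rfl⟩ := hNeven.two_dvd
  rw [h₂, card_filter_odd_Ioc_two_mul (m := 1), card_filter_even_Ioc_two_mul (m := 1), sub_self,
    Nat.cast_sub (by lia)]
  push_cast
  simp only [mul_zero, zero_mul, neg_zero, Complex.exp_zero]
  ring
end

section
/- (Exact ground-state amplitude for Algorithm 2.) Let N ≥ 3 be an integer, γ, ω nonzero reals, and set D := ((N−1)γ² + ω²)² − 4γ²ω², Ω± := √((((N−1)γ² + ω²) ± √D)/2). For every Algorithm-2 reduced solution with initial conditions b₁(0) = 0, b₂(0) = 1, b₃(0) = 0, b₄(0) = 0, one has for all t ∈ ℝ: b₁(t) = −i·γ·[ ((Ω₊² − ω²)/(Ω₊² − Ω₋²))·sin(Ω₊ t)/Ω₊ + ((ω² − Ω₋²)/(Ω₊² − Ω₋²))·sin(Ω₋ t)/Ω₋ ]. -/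
open Complex Real

/-!
In the rotating frame, the combinations `s = e^{-iωt} b₃ + e^{iωt} b₄` and
`d = e^{-iωt} b₃ - e^{iωt} b₄` satisfy an autonomous system with `b₁` and `b₂`. Eliminating `b₂`
and `d` leaves two coupled oscillators: with `κ = (N - 2) / 2`,
`b₁'' = -(γ² b₁ + κγ² s)` and `s'' = -(2γ² b₁ + (ω² + 2κγ²) s)`.
The coupling matrix has trace `(N - 1)γ² + ω²` and determinant `γ²ω²`, so its eigenvalues are
`Ω₊²` and `Ω₋²`; for `γω ≠ 0` they are positive and distinct exactly when
`2|γω| < (N - 1)γ² + ω²`. Each left eigenvector gives a combination of `b₁` and `s` that is a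
pure harmonic oscillation, and the difference of the two combinations is a multiple of `b₁`.
-/

section Oscillators

variable {E : Type*} [NormedAddCommGroup E] [NormedSpace ℝ E]

theorem eq_cos_smul_add_sin_div_smul_of_hasDerivAt {Ω : ℝ} (hΩ : Ω ≠ 0) {x v : ℝ → E}
    (hx : ∀ t, HasDerivAt x (v t) t) (hv : ∀ t, HasDerivAt v (-(Ω ^ 2 • x t)) t) (t : ℝ) :
    x t = Real.cos (Ω * t) • x 0 + (Real.sin (Ω * t) / Ω) • v 0 := by
  -- Evolving the state at time `s` forward to time `t` gives a result independent of `s`.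
  let g : ℝ → E := fun s ↦
    Real.cos (Ω * (t - s)) • x s + (Real.sin (Ω * (t - s)) / Ω) • v s
  have hg (s : ℝ) : HasDerivAt g 0 s := by
    have hphase : HasDerivAt (fun s ↦ Ω * (t - s)) (-Ω) s := by
      simpa using ((hasDerivAt_id s).const_sub t).const_mul Ω
    refine ((hphase.cos.smul (hx s)).add ((hphase.sin.div_const Ω).smul (hv s))).congr_deriv ?_
    match_scalars <;> field_simp <;> ring
  have hconst : g t = g 0 :=
    is_const_of_deriv_eq_zero (fun s ↦ (hg s).differentiableAt) (fun s ↦ (hg s).deriv) t 0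
  simpa [g] using hconst

theorem normalMode_eq_cos_smul_add_sin_div_smul {α β ζ δ Ω : ℝ} (hΩ : Ω ≠ 0)
    (hchar : (α - Ω ^ 2) * (δ - Ω ^ 2) = β * ζ) {x x' y y' : ℝ → E}
    (hx : ∀ t, HasDerivAt x (x' t) t) (hx' : ∀ t, HasDerivAt x' (-(α • x t + β • y t)) t)
    (hy : ∀ t, HasDerivAt y (y' t) t) (hy' : ∀ t, HasDerivAt y' (-(ζ • x t + δ • y t)) t)
    (t : ℝ) :
    (δ - Ω ^ 2) • x t - β • y t =
      Real.cos (Ω * t) • ((δ - Ω ^ 2) • x 0 - β • y 0) +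
        (Real.sin (Ω * t) / Ω) • ((δ - Ω ^ 2) • x' 0 - β • y' 0) := by
  refine eq_cos_smul_add_sin_div_smul_of_hasDerivAt (x := fun t ↦ (δ - Ω ^ 2) • x t - β • y t)
    (v := fun t ↦ (δ - Ω ^ 2) • x' t - β • y' t) hΩ
    (fun t ↦ ((hx t).const_smul _).sub ((hy t).const_smul _)) (fun t ↦ ?_) t
  refine (((hx' t).const_smul (δ - Ω ^ 2)).sub ((hy' t).const_smul β)).congr_deriv ?_
  linear_combination (norm := module) -hchar • x t

end Oscillators

section CharacteristicRoots

variable {S P : ℝ}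

theorem sqrt_sq_sub_four_mul_lt (hS : 0 < S) (hP : 0 < P) : √(S ^ 2 - 4 * P) < S := by
  rw [Real.sqrt_lt' hS]
  linarith

theorem sq_half_add_sub_mul_add_eq_zero {r : ℝ} (hr : r ^ 2 = S ^ 2 - 4 * P) :
    ((S + r) / 2) ^ 2 - S * ((S + r) / 2) + P = 0 := by
  linear_combination hr / 4

end CharacteristicRoots

theorem hasDerivAt_of_I_mul_deriv_eq {f : ℝ → ℂ} {z : ℂ} {t : ℝ} (hf : DifferentiableAt ℝ f t)
    (h : I * deriv f t = z) : HasDerivAt f (-I * z) t :=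
  hf.hasDerivAt.congr_deriv (by linear_combination -I * h + deriv f t * I_mul_I)

theorem hasDerivAt_cexp_mul_ofReal (c : ℂ) (t : ℝ) :
    HasDerivAt (fun t : ℝ ↦ Complex.exp (c * t)) (c * Complex.exp (c * t)) t := by
  simpa [mul_comm] using ((hasDerivAt_id (t : ℂ)).const_mul c).cexp.comp_ofReal

/-- The reduced amplitude equations of Algorithm 2. The number `N` enters only through the coupling
constant `(N - 2) / 2` and is allowed to be any real number. -/
structure IsAlgorithm2Solution_s11 (N γ ω : ℝ) (b₁ b₂ b₃ b₄ : ℝ → ℂ) : Prop where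
  differentiable₁ : Differentiable ℝ b₁
  differentiable₂ : Differentiable ℝ b₂
  differentiable₃ : Differentiable ℝ b₃
  differentiable₄ : Differentiable ℝ b₄
  eq₁ (t : ℝ) : I * deriv b₁ t = γ * b₂ t
  eq₂ (t : ℝ) : I * deriv b₂ t =
    γ * b₁ t + (((N : ℂ) - 2) / 2) * γ *
      (Complex.exp (-(I * ω * t)) * b₃ t + Complex.exp (I * ω * t) * b₄ t)
  eq₃ (t : ℝ) : I * deriv b₃ t = γ * Complex.exp (I * ω * t) * b₂ t
  eq₄ (t : ℝ) : I * deriv b₄ t = γ * Complex.exp (-(I * ω * t)) * b₂ t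

/-- The sum of the amplitudes `b₃` and `b₄`, each seen in its rotating frame; this is the
combination that couples to `b₂`. -/
noncomputable def rotatingSum (ω : ℝ) (b₃ b₄ : ℝ → ℂ) (t : ℝ) : ℂ :=
  Complex.exp (-(I * ω * t)) * b₃ t + Complex.exp (I * ω * t) * b₄ t

/-- The difference of the amplitudes `b₃` and `b₄`, each seen in its rotating frame; it drives
`rotatingSum`. -/
noncomputable def rotatingDiff (ω : ℝ) (b₃ b₄ : ℝ → ℂ) (t : ℝ) : ℂ :=
  Complex.exp (-(I * ω * t)) * b₃ t - Complex.exp (I * ω * t) * b₄ t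

namespace IsAlgorithm2Solution_s11

variable {N γ ω : ℝ} {b₁ b₂ b₃ b₄ : ℝ → ℂ}

theorem hasDerivAt₁ (h : IsAlgorithm2Solution_s11 N γ ω b₁ b₂ b₃ b₄) (t : ℝ) :
    HasDerivAt b₁ (-I * (γ * b₂ t)) t :=
  hasDerivAt_of_I_mul_deriv_eq (h.differentiable₁ t) (h.eq₁ t)

theorem hasDerivAt₂ (h : IsAlgorithm2Solution_s11 N γ ω b₁ b₂ b₃ b₄) (t : ℝ) :
    HasDerivAt b₂ (-I * (γ * b₁ t + ((N : ℂ) - 2) / 2 * γ * rotatingSum ω b₃ b₄ t)) t :=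
  hasDerivAt_of_I_mul_deriv_eq (h.differentiable₂ t) (h.eq₂ t)

theorem hasDerivAt_exp_mul₃ (h : IsAlgorithm2Solution_s11 N γ ω b₁ b₂ b₃ b₄) (t : ℝ) :
    HasDerivAt (fun t : ℝ ↦ Complex.exp (-(I * ω * t)) * b₃ t)
      (-I * (ω * (Complex.exp (-(I * ω * t)) * b₃ t) + γ * b₂ t)) t := by
  have hexp := hasDerivAt_cexp_mul_ofReal (-(I * ω)) t
  simp only [neg_mul] at hexp
  have hb₃ := hasDerivAt_of_I_mul_deriv_eq (h.differentiable₃ t) (h.eq₃ t)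
  have hcancel : Complex.exp (-(I * ω * t)) * Complex.exp (I * ω * t) = 1 := by
    rw [← Complex.exp_add, neg_add_cancel, Complex.exp_zero]
  refine (hexp.mul hb₃).congr_deriv ?_
  linear_combination -I * γ * b₂ t * hcancel

theorem hasDerivAt_exp_mul₄ (h : IsAlgorithm2Solution_s11 N γ ω b₁ b₂ b₃ b₄) (t : ℝ) :
    HasDerivAt (fun t : ℝ ↦ Complex.exp (I * ω * t) * b₄ t)
      (-I * (-ω * (Complex.exp (I * ω * t) * b₄ t) + γ * b₂ t)) t := by
  have hb₄ := hasDerivAt_of_I_mul_deriv_eq (h.differentiable₄ t) (h.eq₄ t)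
  have hcancel : Complex.exp (I * ω * t) * Complex.exp (-(I * ω * t)) = 1 := by
    rw [← Complex.exp_add, add_neg_cancel, Complex.exp_zero]
  refine ((hasDerivAt_cexp_mul_ofReal (I * ω) t).mul hb₄).congr_deriv ?_
  linear_combination -I * γ * b₂ t * hcancel

theorem hasDerivAt_rotatingSum (h : IsAlgorithm2Solution_s11 N γ ω b₁ b₂ b₃ b₄) (t : ℝ) :
    HasDerivAt (rotatingSum ω b₃ b₄) (-I * (ω * rotatingDiff ω b₃ b₄ t + 2 * (γ * b₂ t))) t := by
  refine ((h.hasDerivAt_exp_mul₃ t).add (h.hasDerivAt_exp_mul₄ t)).congr_deriv ?_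
  rw [rotatingDiff]
  ring

theorem hasDerivAt_rotatingDiff (h : IsAlgorithm2Solution_s11 N γ ω b₁ b₂ b₃ b₄) (t : ℝ) :
    HasDerivAt (rotatingDiff ω b₃ b₄) (-I * (ω * rotatingSum ω b₃ b₄ t)) t := by
  refine ((h.hasDerivAt_exp_mul₃ t).sub (h.hasDerivAt_exp_mul₄ t)).congr_deriv ?_
  rw [rotatingSum]
  ring

theorem hasDerivAt_deriv₁ (h : IsAlgorithm2Solution_s11 N γ ω b₁ b₂ b₃ b₄) (t : ℝ) :
    HasDerivAt (fun t ↦ -I * (γ * b₂ t))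
      (-(γ ^ 2 • b₁ t + ((N - 2) / 2 * γ ^ 2) • rotatingSum ω b₃ b₄ t)) t := by
  refine (((h.hasDerivAt₂ t).const_mul (γ : ℂ)).const_mul (-I)).congr_deriv ?_
  simp only [real_smul]
  push_cast
  linear_combination
    γ ^ 2 * (b₁ t + ((N : ℂ) - 2) / 2 * rotatingSum ω b₃ b₄ t) * I_mul_I

theorem hasDerivAt_deriv_rotatingSum (h : IsAlgorithm2Solution_s11 N γ ω b₁ b₂ b₃ b₄) (t : ℝ) :
    HasDerivAt (fun t ↦ -I * (ω * rotatingDiff ω b₃ b₄ t + 2 * (γ * b₂ t)))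
      (-((2 * γ ^ 2) • b₁ t + (ω ^ 2 + (N - 2) * γ ^ 2) • rotatingSum ω b₃ b₄ t)) t := by
  refine ((((h.hasDerivAt_rotatingDiff t).const_mul (ω : ℂ)).add
    (((h.hasDerivAt₂ t).const_mul (γ : ℂ)).const_mul 2)).const_mul (-I)).congr_deriv ?_
  simp only [real_smul]
  push_cast
  linear_combination
    (2 * γ ^ 2 * b₁ t + (ω ^ 2 + (N - 2) * γ ^ 2) * rotatingSum ω b₃ b₄ t) * I_mul_I

theorem normalMode_eq (h : IsAlgorithm2Solution_s11 N γ ω b₁ b₂ b₃ b₄)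
    (hb₁ : b₁ 0 = 0) (hb₃ : b₃ 0 = 0) (hb₄ : b₄ 0 = 0) {Ω : ℝ} (hΩ : Ω ≠ 0)
    (hchar : (Ω ^ 2) ^ 2 - ((N - 1) * γ ^ 2 + ω ^ 2) * Ω ^ 2 + γ ^ 2 * ω ^ 2 = 0) (t : ℝ) :
    (ω ^ 2 + (N - 2) * γ ^ 2 - Ω ^ 2) * b₁ t - (N - 2) / 2 * γ ^ 2 * rotatingSum ω b₃ b₄ t =
      -I * γ * b₂ 0 * ((ω ^ 2 - Ω ^ 2) * (Real.sin (Ω * t) / Ω)) := by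
  have hchar' : (γ ^ 2 - Ω ^ 2) * (ω ^ 2 + (N - 2) * γ ^ 2 - Ω ^ 2) =
      (N - 2) / 2 * γ ^ 2 * (2 * γ ^ 2) := by
    linear_combination hchar
  have hmode := normalMode_eq_cos_smul_add_sin_div_smul hΩ hchar' h.hasDerivAt₁
    h.hasDerivAt_deriv₁ h.hasDerivAt_rotatingSum h.hasDerivAt_deriv_rotatingSum t
  have hsum : rotatingSum ω b₃ b₄ 0 = 0 := by simp [rotatingSum, hb₃, hb₄]
  have hdiff : rotatingDiff ω b₃ b₄ 0 = 0 := by simp [rotatingDiff, hb₃, hb₄]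
  simp only [hb₁, hsum, hdiff, real_smul] at hmode
  push_cast at hmode ⊢
  linear_combination hmode

theorem amplitude_eq_of_frequencies (h : IsAlgorithm2Solution_s11 N γ ω b₁ b₂ b₃ b₄)
    (hb₁ : b₁ 0 = 0) (hb₃ : b₃ 0 = 0) (hb₄ : b₄ 0 = 0) {Ωp Ωm : ℝ} (hΩp : Ωp ≠ 0) (hΩm : Ωm ≠ 0)
    (hne : Ωp ^ 2 ≠ Ωm ^ 2)
    (hcharp : (Ωp ^ 2) ^ 2 - ((N - 1) * γ ^ 2 + ω ^ 2) * Ωp ^ 2 + γ ^ 2 * ω ^ 2 = 0)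
    (hcharm : (Ωm ^ 2) ^ 2 - ((N - 1) * γ ^ 2 + ω ^ 2) * Ωm ^ 2 + γ ^ 2 * ω ^ 2 = 0) (t : ℝ) :
    b₁ t = -I * γ * b₂ 0 *
      ((((Ωp ^ 2 - ω ^ 2) / (Ωp ^ 2 - Ωm ^ 2)) * (Real.sin (Ωp * t) / Ωp) +
        ((ω ^ 2 - Ωm ^ 2) / (Ωp ^ 2 - Ωm ^ 2)) * (Real.sin (Ωm * t) / Ωm) : ℝ) : ℂ) := by
  have hmodep := h.normalMode_eq hb₁ hb₃ hb₄ hΩp hcharp t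
  have hmodem := h.normalMode_eq hb₁ hb₃ hb₄ hΩm hcharm t
  have hgap : (Ωp : ℂ) ^ 2 - Ωm ^ 2 ≠ 0 := by exact_mod_cast sub_ne_zero.2 hne
  have hdiff : ((Ωp : ℂ) ^ 2 - Ωm ^ 2) * b₁ t = -I * γ * b₂ 0 *
      ((Ωp ^ 2 - ω ^ 2) * (Real.sin (Ωp * t) / Ωp) +
        (ω ^ 2 - Ωm ^ 2) * (Real.sin (Ωm * t) / Ωm)) := by
    linear_combination hmodem - hmodep
  rw [eq_div_of_mul_eq hgap ((mul_comm _ _).trans hdiff)]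
  push_cast
  ring

end IsAlgorithm2Solution_s11

theorem two_mul_abs_mul_lt {N γ ω : ℝ} (hN : 2 < N) (hγ : γ ≠ 0) :
    2 * |γ * ω| < (N - 1) * γ ^ 2 + ω ^ 2 :=
  calc
    2 * |γ * ω| = 2 * |γ| * |ω| := by rw [abs_mul, mul_assoc]
    _ ≤ γ ^ 2 + ω ^ 2 := by simpa only [sq_abs] using two_mul_le_add_sq |γ| |ω|
    _ < (N - 1) * γ ^ 2 + ω ^ 2 := by
      gcongr
      exact lt_mul_of_one_lt_left (by positivity) (by linarith)

theorem algorithm2_exact_amplitude_general {N γ ω : ℝ} (hγ : γ ≠ 0) (hω : ω ≠ 0)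
    (hgap : 2 * |γ * ω| < (N - 1) * γ ^ 2 + ω ^ 2) {D Ωp Ωm : ℝ}
    (hD : D = ((N - 1) * γ ^ 2 + ω ^ 2) ^ 2 - 4 * γ ^ 2 * ω ^ 2)
    (hΩp : Ωp = √(((N - 1) * γ ^ 2 + ω ^ 2 + √D) / 2))
    (hΩm : Ωm = √(((N - 1) * γ ^ 2 + ω ^ 2 - √D) / 2))
    {b₁ b₂ b₃ b₄ : ℝ → ℂ} (h : IsAlgorithm2Solution_s11 N γ ω b₁ b₂ b₃ b₄)
    (hb₁ : b₁ 0 = 0) (hb₃ : b₃ 0 = 0) (hb₄ : b₄ 0 = 0) (t : ℝ) :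
    b₁ t = -I * γ * b₂ 0 *
      ((((Ωp ^ 2 - ω ^ 2) / (Ωp ^ 2 - Ωm ^ 2)) * (Real.sin (Ωp * t) / Ωp) +
        ((ω ^ 2 - Ωm ^ 2) / (Ωp ^ 2 - Ωm ^ 2)) * (Real.sin (Ωm * t) / Ωm) : ℝ) : ℂ) := by
  set S := (N - 1) * γ ^ 2 + ω ^ 2
  have hS_pos : 0 < S := (by positivity : 0 ≤ 2 * |γ * ω|).trans_lt hgap
  have hD' : D = S ^ 2 - 4 * (γ ^ 2 * ω ^ 2) := by rw [hD, mul_assoc]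
  have hD_pos : 0 < D := by
    have := pow_lt_pow_left₀ hgap (by positivity) two_ne_zero
    rw [mul_pow, sq_abs] at this
    linarith
  have hr_pos : 0 < √D := Real.sqrt_pos.2 hD_pos
  have hr_lt : √D < S := hD' ▸ sqrt_sq_sub_four_mul_lt hS_pos (by positivity)
  have hr_sq : √D ^ 2 = S ^ 2 - 4 * (γ ^ 2 * ω ^ 2) := (Real.sq_sqrt hD_pos.le).trans hD'
  have hp_sq : Ωp ^ 2 = (S + √D) / 2 := by rw [hΩp, Real.sq_sqrt (by linarith)]
  have hm_sq : Ωm ^ 2 = (S + -√D) / 2 := by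
    rw [hΩm, Real.sq_sqrt (by linarith), sub_eq_add_neg]
  refine h.amplitude_eq_of_frequencies hb₁ hb₃ hb₄ ?_ ?_ ?_ ?_ ?_ t
  · exact hΩp ▸ (Real.sqrt_pos.2 (by linarith)).ne'
  · exact hΩm ▸ (Real.sqrt_pos.2 (by linarith)).ne'
  · linarith
  · rw [hp_sq]
    exact sq_half_add_sub_mul_add_eq_zero hr_sq
  · rw [hm_sq]
    exact sq_half_add_sub_mul_add_eq_zero ((neg_sq _).trans hr_sq)

/-- Exact ground-state amplitude for Algorithm 2: with
`D = ((N−1)γ² + ω²)² − 4γ²ω²` and `Ω± = √((((N−1)γ² + ω²) ± √D)/2)`, every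
Algorithm-2 reduced solution with `b₁(0) = 0`, `b₂(0) = 1`, `b₃(0) = 0`,
`b₄(0) = 0` satisfies
`b₁(t) = −iγ[((Ω₊² − ω²)/(Ω₊² − Ω₋²))·sin(Ω₊t)/Ω₊
  + ((ω² − Ω₋²)/(Ω₊² − Ω₋²))·sin(Ω₋t)/Ω₋]`. -/
theorem algorithm2_exact_amplitude
    (N : ℕ) (hN : 3 ≤ N) (γ ω : ℝ) (hγ : γ ≠ 0) (hω : ω ≠ 0)
    (D Ωp Ωm : ℝ)
    (hD : D = (((N : ℝ) - 1) * γ ^ 2 + ω ^ 2) ^ 2 - 4 * γ ^ 2 * ω ^ 2)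
    (hΩp : Ωp = Real.sqrt (((((N : ℝ) - 1) * γ ^ 2 + ω ^ 2) + Real.sqrt D) / 2))
    (hΩm : Ωm = Real.sqrt (((((N : ℝ) - 1) * γ ^ 2 + ω ^ 2) - Real.sqrt D) / 2))
    (b₁ b₂ b₃ b₄ : ℝ → ℂ)
    (hd₁ : Differentiable ℝ b₁) (hd₂ : Differentiable ℝ b₂)
    (hd₃ : Differentiable ℝ b₃) (hd₄ : Differentiable ℝ b₄)
    (heq₁ : ∀ t : ℝ, Complex.I * deriv b₁ t = (γ : ℂ) * b₂ t)
    (heq₂ : ∀ t : ℝ, Complex.I * deriv b₂ t =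
      (γ : ℂ) * b₁ t +
        (((N : ℂ) - 2) / 2) * γ *
          (Complex.exp (-(Complex.I * ω * t)) * b₃ t +
            Complex.exp (Complex.I * ω * t) * b₄ t))
    (heq₃ : ∀ t : ℝ, Complex.I * deriv b₃ t =
      (γ : ℂ) * Complex.exp (Complex.I * ω * t) * b₂ t)
    (heq₄ : ∀ t : ℝ, Complex.I * deriv b₄ t =
      (γ : ℂ) * Complex.exp (-(Complex.I * ω * t)) * b₂ t)
    (hb₁0 : b₁ 0 = 0) (hb₂0 : b₂ 0 = 1) (hb₃0 : b₃ 0 = 0) (hb₄0 : b₄ 0 = 0) :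
    ∀ t : ℝ,
      b₁ t = -Complex.I * (γ : ℂ) *
        ((((Ωp ^ 2 - ω ^ 2) / (Ωp ^ 2 - Ωm ^ 2)) * (Real.sin (Ωp * t) / Ωp) +
          ((ω ^ 2 - Ωm ^ 2) / (Ωp ^ 2 - Ωm ^ 2)) * (Real.sin (Ωm * t) / Ωm) : ℝ) : ℂ) := by
  have hgap := two_mul_abs_mul_lt (ω := ω) (show (2 : ℝ) < N by exact_mod_cast hN) hγ
  simpa only [hb₂0, mul_one] using algorithm2_exact_amplitude_general hγ hω hgap hD hΩp hΩm
    ⟨hd₁, hd₂, hd₃, hd₄, heq₁, by exact_mod_cast heq₂, heq₃, heq₄⟩ hb₁0 hb₃0 hb₄0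
end
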